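/- Let g ≠ 0 and let β* ∈ ℝ. Suppose there exist a sequence of real numbers β_n → β* and GP solutions φ_n on [0,L] with parameter β_n, each continuously differentiable on [0,L] and not identically zero, such that sup_{x∈[0,L]}|φ_n(x)| + sup_{x∈[0,L]}|φ_n'(x)| → 0. Then β* = β_k for some integer k ≥ 1. (The quantum critical points of the BEC system are exactly the values β_k = ℏλ − (ℏ²/(4m))(kπ/L)².) -/

import Mathlib

open Set MeasureTheory intervalIntegral Filter Topology

/-- `φ` is a GP solution on `[a,b]` with parameter `β`:
`φ` is continuous on `[a,b]`, twice continuously differentiable on `(a,b)`,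
satisfies `-(ℏ²/(4m))·φ'' + (β - ℏλ)·φ + g·φ³ = 0` on `(a,b)`,
and `φ a = φ b = 0`. -/
def IsGPSolution (ℏ m lam g a b β : ℝ) (φ : ℝ → ℝ) : Prop :=
  ContinuousOn φ (Set.Icc a b) ∧
  ContDiffOn ℝ 2 φ (Set.Ioo a b) ∧
  (∀ x ∈ Set.Ioo a b,
    -(ℏ ^ 2 / (4 * m)) * deriv (deriv φ) x + (β - ℏ * lam) * φ x + g * (φ x) ^ 3 = 0) ∧
  φ a = 0 ∧ φ b = 0

/-- The quantum critical points `β_k = ℏλ - (ℏ²/(4m))·(kπ/L)²`. -/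
noncomputable def betaCrit (ℏ m lam L : ℝ) (k : ℕ) : ℝ :=
  ℏ * lam - (ℏ ^ 2 / (4 * m)) * ((k : ℝ) * Real.pi / L) ^ 2

/-!
Near `φ = 0` and `β = β*` the equation reads `φ'' + c φ = o(1) φ`, where
`c = (ℏλ - β*) / (ℏ² / 4m)`. If `c` is not a Dirichlet eigenvalue of `-d²/dx²`, then
`sup |φ| ≤ M sup |φ'' + c φ|` for all `φ` vanishing at both ends, and absorbing the right-hand side
forces `φ = 0`.

The estimate comes from variation of constants based at an interior point `s`: letting the other
point tend to `a` and to `b` gives two linear relations between `φ s` and `φ' s`, whose determinant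
is the Wronskian `S (b - a)`, so that `φ s` can be isolated.
-/

/-- The solutions `S`, `C` of `y'' + c y = 0` generalizing sine and cosine: `S' = C`, `C' = -c S`,
`S 0 = 0`, `C 0 = 1`. -/
structure IsSinCosPair (c : ℝ) (S C : ℝ → ℝ) : Prop where
  hasDerivAt_sin (x : ℝ) : HasDerivAt S (C x) x
  hasDerivAt_cos (x : ℝ) : HasDerivAt C (-c * S x) x
  sin_zero : S 0 = 0
  cos_zero : C 0 = 1

namespace IsSinCosPair

variable {c : ℝ} {S C : ℝ → ℝ}

lemma continuous_sin (h : IsSinCosPair c S C) : Continuous S :=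
  continuous_iff_continuousAt.2 fun x => (h.hasDerivAt_sin x).continuousAt

lemma continuous_cos (h : IsSinCosPair c S C) : Continuous C :=
  continuous_iff_continuousAt.2 fun x => (h.hasDerivAt_cos x).continuousAt

lemma sin_sub (h : IsSinCosPair c S C) (x y : ℝ) : S (y - x) = C x * S y - C y * S x := by
  -- The Wronskian of the translates of `S` by `x` and `y` is constant; compare `-x` with `0`.
  let W : ℝ → ℝ := fun t => C (x + t) * S (y + t) - C (y + t) * S (x + t)
  have hW (t : ℝ) : HasDerivAt W 0 t := by
    have hS (z : ℝ) := (h.hasDerivAt_sin (z + t)).comp_const_add z t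
    have hC (z : ℝ) := (h.hasDerivAt_cos (z + t)).comp_const_add z t
    exact (((hC x).mul (hS y)).sub ((hC y).mul (hS x))).congr_deriv (by ring)
  have hconst : W (-x) = W 0 :=
    is_const_of_deriv_eq_zero (fun t => (hW t).differentiableAt) (fun t => (hW t).deriv) _ _
  simpa [W, h.sin_zero, h.cos_zero, ← sub_eq_add_neg] using hconst

end IsSinCosPair

lemma isSinCosPair_sin {r : ℝ} (hr : r ≠ 0) :
    IsSinCosPair (r ^ 2) (fun x => Real.sin (r * x) / r) (fun x => Real.cos (r * x)) where
  hasDerivAt_sin x :=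
    ((((hasDerivAt_id' x).const_mul r).sin).div_const r).congr_deriv (by field_simp)
  hasDerivAt_cos x := (((hasDerivAt_id' x).const_mul r).cos).congr_deriv (by field_simp)
  sin_zero := by simp
  cos_zero := by simp

lemma isSinCosPair_id : IsSinCosPair 0 (fun x => x) (fun _ => 1) where
  hasDerivAt_sin := hasDerivAt_id'
  hasDerivAt_cos x := by simpa using hasDerivAt_const x (1 : ℝ)
  sin_zero := rfl
  cos_zero := rfl

lemma isSinCosPair_sinh {r : ℝ} (hr : r ≠ 0) :
    IsSinCosPair (-r ^ 2) (fun x => Real.sinh (r * x) / r) (fun x => Real.cosh (r * x)) where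
  hasDerivAt_sin x :=
    ((((hasDerivAt_id' x).const_mul r).sinh).div_const r).congr_deriv (by field_simp)
  hasDerivAt_cos x := (((hasDerivAt_id' x).const_mul r).cosh).congr_deriv (by field_simp)
  sin_zero := by simp
  cos_zero := by simp

/-- The Dirichlet eigenvalues of `-d²/dx²` on an interval of length `L`, listed explicitly. -/
def dirichletEigenvalues (L : ℝ) : Set ℝ :=
  {c | ∃ k : ℕ, 1 ≤ k ∧ c = (k * Real.pi / L) ^ 2}

lemma sq_mem_dirichletEigenvalues_of_sin_eq_zero {r L : ℝ} (hr : 0 < r) (hL : 0 < L)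
    (h : Real.sin (r * L) = 0) : r ^ 2 ∈ dirichletEigenvalues L := by
  obtain ⟨k, hk⟩ := Real.sin_eq_zero_iff.1 h
  have hk_pos : 0 < k := by
    have : 0 < (k : ℝ) * Real.pi := hk ▸ mul_pos hr hL
    exact_mod_cast pos_of_mul_pos_left this Real.pi_pos.le
  lift k to ℕ using hk_pos.le
  refine ⟨k, by exact_mod_cast hk_pos, ?_⟩
  rw [← Int.cast_natCast k, hk, mul_div_cancel_right₀ _ hL.ne']

lemma exists_isSinCosPair_ne_zero {c L : ℝ} (hL : 0 < L) (hc : c ∉ dirichletEigenvalues L) :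
    ∃ S C, IsSinCosPair c S C ∧ S L ≠ 0 := by
  rcases lt_trichotomy c 0 with hneg | rfl | hpos
  · have hr : 0 < √(-c) := Real.sqrt_pos.2 (neg_pos.2 hneg)
    have hsq : -√(-c) ^ 2 = c := by rw [Real.sq_sqrt (neg_pos.2 hneg).le, neg_neg]
    exact ⟨_, _, hsq ▸ isSinCosPair_sinh hr.ne',
      (div_pos (Real.sinh_pos_iff.2 (mul_pos hr hL)) hr).ne'⟩
  · exact ⟨_, _, isSinCosPair_id, hL.ne'⟩
  · have hr : 0 < √c := Real.sqrt_pos.2 hpos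
    have hsq : √c ^ 2 = c := Real.sq_sqrt hpos.le
    have hpair := isSinCosPair_sin hr.ne'
    rw [hsq] at hpair
    have hsin : Real.sin (√c * L) ≠ 0 := fun h =>
      hc (hsq ▸ sq_mem_dirichletEigenvalues_of_sin_eq_zero hr hL h)
    exact ⟨_, _, hpair, div_ne_zero hsin hr.ne'⟩

/-- `φ : [a, b] → E` is continuous, vanishes at both endpoints, and is twice differentiable on
`(a, b)` with derivatives `φ'` and `φ''`, which are carried as data with irrelevant values outside
`(a, b)`. -/
structure IsDirichletCurve {E : Type*} [NormedAddCommGroup E] [NormedSpace ℝ E]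
    (a b : ℝ) (φ φ' φ'' : ℝ → E) : Prop where
  continuousOn : ContinuousOn φ (Icc a b)
  hasDerivAt : ∀ x ∈ Ioo a b, HasDerivAt φ (φ' x) x
  hasDerivAt_deriv : ∀ x ∈ Ioo a b, HasDerivAt φ' (φ'' x) x
  left_eq_zero : φ a = 0
  right_eq_zero : φ b = 0

section Estimates

variable {E : Type*} [NormedAddCommGroup E] [NormedSpace ℝ E]
  {a b c D K : ℝ} {S C : ℝ → ℝ} {φ φ' φ'' : ℝ → E}

namespace IsSinCosPair

lemma norm_sub_variation_of_constants_le (h : IsSinCosPair c S C) {I : Set ℝ} (hI : Convex ℝ I)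
    (hφ : ∀ t ∈ I, HasDerivWithinAt φ (φ' t) I t) (hφ' : ∀ t ∈ I, HasDerivWithinAt φ' (φ'' t) I t)
    (hD : ∀ t ∈ I, ‖φ'' t + c • φ t‖ ≤ D) {s x : ℝ} (hs : s ∈ I) (hx : x ∈ I)
    (hK : ∀ t ∈ I, |S (x - t)| ≤ K) :
    ‖φ x - (C (x - s) • φ s + S (x - s) • φ' s)‖ ≤ K * D * |x - s| := by
  let G : ℝ → E := fun t => C (x - t) • φ t + S (x - t) • φ' t
  have hG (t : ℝ) (ht : t ∈ I) :
      HasDerivWithinAt G (S (x - t) • (φ'' t + c • φ t)) I t := by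
    have hSt := ((h.hasDerivAt_sin (x - t)).comp_const_sub x t).hasDerivWithinAt (s := I)
    have hCt := ((h.hasDerivAt_cos (x - t)).comp_const_sub x t).hasDerivWithinAt (s := I)
    exact ((hCt.smul (hφ t ht)).add (hSt.smul (hφ' t ht))).congr_deriv (by module)
  have hG_le (t : ℝ) (ht : t ∈ I) : ‖S (x - t) • (φ'' t + c • φ t)‖ ≤ K * D := by
    rw [norm_smul, Real.norm_eq_abs]
    exact mul_le_mul (hK t ht) (hD t ht) (norm_nonneg _) ((abs_nonneg _).trans (hK t ht))
  simpa [G, h.sin_zero, h.cos_zero] using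
    hI.norm_image_sub_le_of_norm_hasDerivWithin_le hG hG_le hs hx

lemma norm_sub_variation_of_constants_le_of_mem_Icc (h : IsSinCosPair c S C)
    (hcont : ContinuousOn φ (Icc a b)) (hφ : ∀ t ∈ Ioo a b, HasDerivAt φ (φ' t) t)
    (hφ' : ∀ t ∈ Ioo a b, HasDerivAt φ' (φ'' t) t)
    (hD : ∀ t ∈ Ioo a b, ‖φ'' t + c • φ t‖ ≤ D)
    (hK : ∀ u ∈ Icc (a - b) (b - a), |S u| ≤ K) {s x : ℝ} (hs : s ∈ Ioo a b) (hx : x ∈ Icc a b) :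
    ‖φ x - (C (x - s) • φ s + S (x - s) • φ' s)‖ ≤ K * D * |x - s| := by
  have hclosure : closure (Ioo a b) = Icc a b := closure_Ioo (hs.1.trans hs.2).ne
  have hS := h.continuous_sin
  have hC := h.continuous_cos
  refine le_on_closure (f := fun y => ‖φ y - (C (y - s) • φ s + S (y - s) • φ' s)‖)
    (g := fun y => K * D * |y - s|) (fun y hy => ?_) ?_ ?_ (hclosure.symm ▸ hx)
  · exact h.norm_sub_variation_of_constants_le (convex_Ioo a b)
      (fun t ht => (hφ t ht).hasDerivWithinAt)
      (fun t ht => (hφ' t ht).hasDerivWithinAt) hD hs hy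
      fun t ht => hK _ ⟨by linarith [hy.1, ht.2], by linarith [hy.2, ht.1]⟩
  · rw [hclosure]
    exact (hcont.sub (Continuous.continuousOn (by fun_prop))).norm
  · fun_prop

end IsSinCosPair

namespace IsDirichletCurve

lemma abs_sin_mul_norm_le (hφ : IsDirichletCurve a b φ φ' φ'') (h : IsSinCosPair c S C)
    (hK : ∀ u ∈ Icc (a - b) (b - a), |S u| ≤ K) (hD : ∀ t ∈ Ioo a b, ‖φ'' t + c • φ t‖ ≤ D)
    {s : ℝ} (hs : s ∈ Ioo a b) : |S (b - a)| * ‖φ s‖ ≤ K ^ 2 * (b - a) * D := by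
  have hab : a ≤ b := (hs.1.trans hs.2).le
  have h_sub_le {x : ℝ} (hx : x ∈ Icc a b) :=
    h.norm_sub_variation_of_constants_le_of_mem_Icc hφ.continuousOn hφ.hasDerivAt
      hφ.hasDerivAt_deriv hD hK hs hx
  let G : ℝ → E := fun x => C (x - s) • φ s + S (x - s) • φ' s
  have hGa : ‖G a‖ ≤ K * D * (s - a) := by
    simpa only [hφ.left_eq_zero, zero_sub, norm_neg, abs_sub_comm a s,
      abs_of_pos (sub_pos.2 hs.1)] using
      h_sub_le (left_mem_Icc.2 hab)
  have hGb : ‖G b‖ ≤ K * D * (b - s) := by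
    simpa only [hφ.right_eq_zero, zero_sub, norm_neg, abs_of_pos (sub_pos.2 hs.2)] using
      h_sub_le (right_mem_Icc.2 hab)
  have hSa : |S (a - s)| ≤ K := hK _ ⟨by linarith [hs.2], by linarith [hs.1]⟩
  have hSb : |S (b - s)| ≤ K := hK _ ⟨by linarith [hs.2], by linarith [hs.1]⟩
  have hK0 : 0 ≤ K := (abs_nonneg _).trans hSa
  have hCramer : S (b - a) • φ s = S (b - s) • G a - S (a - s) • G b := by
    rw [← sub_sub_sub_cancel_right b a s, h.sin_sub]
    module
  calc |S (b - a)| * ‖φ s‖ = ‖S (b - s) • G a - S (a - s) • G b‖ := by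
        rw [← hCramer, norm_smul, Real.norm_eq_abs]
    _ ≤ |S (b - s)| * ‖G a‖ + |S (a - s)| * ‖G b‖ := by
        simpa only [norm_smul, Real.norm_eq_abs] using
          norm_sub_le (S (b - s) • G a) (S (a - s) • G b)
    _ ≤ K * (K * D * (s - a)) + K * (K * D * (b - s)) := by gcongr
    _ = K ^ 2 * (b - a) * D := by ring

end IsDirichletCurve

variable (E)

lemma exists_forall_isDirichletCurve_norm_le (hab : a < b)
    (hc : c ∉ dirichletEigenvalues (b - a)) :
    ∃ M, ∀ (φ φ' φ'' : ℝ → E) (D : ℝ), IsDirichletCurve a b φ φ' φ'' →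
      (∀ t ∈ Ioo a b, ‖φ'' t + c • φ t‖ ≤ D) → ∀ x ∈ Ioo a b, ‖φ x‖ ≤ M * D := by
  obtain ⟨S, C, h, hS⟩ := exists_isSinCosPair_ne_zero (sub_pos.2 hab) hc
  obtain ⟨K, hK⟩ :=
    (isCompact_Icc (a := a - b) (b := b - a)).exists_bound_of_continuousOn
      h.continuous_sin.continuousOn
  refine ⟨K ^ 2 * (b - a) / |S (b - a)|, fun φ φ' φ'' D hφ hD x hx => ?_⟩
  rw [div_mul_eq_mul_div, le_div_iff₀' (abs_pos.2 hS)]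
  exact hφ.abs_sin_mul_norm_le h hK hD hx

lemma exists_pos_forall_isDirichletCurve_eqOn_zero (hab : a < b)
    (hc : c ∉ dirichletEigenvalues (b - a)) :
    ∃ δ > 0, ∀ φ φ' φ'' : ℝ → E, IsDirichletCurve a b φ φ' φ'' →
      (∀ t ∈ Ioo a b, ‖φ'' t + c • φ t‖ ≤ δ * ‖φ t‖) → EqOn φ 0 (Icc a b) := by
  obtain ⟨M, hM⟩ := exists_forall_isDirichletCurve_norm_le E hab hc
  obtain ⟨δ, hδ, hMδ⟩ : ∃ δ > 0, M * δ < 1 := exists_pos_mul_lt one_pos M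
  refine ⟨δ, hδ, fun φ φ' φ'' hφ hres => ?_⟩
  obtain ⟨x, hx, hmax⟩ :=
    isCompact_Icc.exists_isMaxOn (nonempty_Icc.2 hab.le) hφ.continuousOn.norm
  have hφx : ‖φ x‖ = 0 := by
    rcases eq_endpoints_or_mem_Ioo_of_mem_Icc hx with rfl | rfl | hx
    · simp [hφ.left_eq_zero]
    · simp [hφ.right_eq_zero]
    · have hle : ‖φ x‖ ≤ M * (δ * ‖φ x‖) := hM φ φ' φ'' _ hφ (fun t ht =>
        (hres t ht).trans (by gcongr; exact hmax (Ioo_subset_Icc_self ht))) x hx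
      nlinarith [norm_nonneg (φ x)]
  exact fun y hy => norm_le_zero_iff.1 (hφx ▸ hmax hy)

end Estimates

namespace IsGPSolution

variable {ℏ m lam g a b β : ℝ} {φ : ℝ → ℝ}

lemma isDirichletCurve (h : IsGPSolution ℏ m lam g a b β φ) :
    IsDirichletCurve a b φ (deriv φ) (deriv (deriv φ)) where
  continuousOn := h.1
  hasDerivAt _ hx :=
    ((h.2.1.differentiableOn two_ne_zero).differentiableAt (isOpen_Ioo.mem_nhds hx)).hasDerivAt
  hasDerivAt_deriv _ hx :=
    (((h.2.1.deriv_of_isOpen isOpen_Ioo one_add_one_eq_two.le).differentiableOn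
      one_ne_zero).differentiableAt (isOpen_Ioo.mem_nhds hx)).hasDerivAt
  left_eq_zero := h.2.2.2.1
  right_eq_zero := h.2.2.2.2

lemma deriv_deriv_add_mul (h : IsGPSolution ℏ m lam g a b β φ) (hℏ : ℏ ≠ 0) (hm : m ≠ 0)
    (β₀ : ℝ) {x : ℝ} (hx : x ∈ Ioo a b) :
    deriv (deriv φ) x + (ℏ * lam - β₀) / (ℏ ^ 2 / (4 * m)) * φ x =
      (β - β₀ + g * φ x ^ 2) / (ℏ ^ 2 / (4 * m)) * φ x := by
  have hode := h.2.2.1 x hx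
  field_simp at hode ⊢
  linarith

end IsGPSolution

lemma exists_eq_betaCrit_of_mem_dirichletEigenvalues {ℏ m lam L β : ℝ} (hℏ : ℏ ≠ 0) (hm : m ≠ 0)
    (h : (ℏ * lam - β) / (ℏ ^ 2 / (4 * m)) ∈ dirichletEigenvalues L) :
    ∃ k : ℕ, 1 ≤ k ∧ β = betaCrit ℏ m lam L k := by
  obtain ⟨k, hk, hβ⟩ := h
  refine ⟨k, hk, ?_⟩
  rw [betaCrit, ← hβ, mul_div_cancel₀ _ (by positivity), sub_sub_cancel]

lemma tendstoUniformlyOn_zero_of_tendsto_sSup_add_sSup {ι α : Type*} {l : Filter ι} {s : Set α}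
    {u v : ι → α → ℝ} (hu : ∀ i, BddAbove ((fun x => |u i x|) '' s))
    (h : Tendsto (fun i => sSup ((fun x => |u i x|) '' s) + sSup ((fun x => |v i x|) '' s))
      l (𝓝 0)) :
    TendstoUniformlyOn u 0 l s := by
  refine Metric.tendstoUniformlyOn_iff.2 fun η hη => ?_
  filter_upwards [h.eventually_lt_const hη] with i hi x hx
  have hu_le : |u i x| ≤ sSup ((fun x => |u i x|) '' s) := le_csSup (hu i) (mem_image_of_mem _ hx)
  have hv_nonneg : 0 ≤ sSup ((fun x => |v i x|) '' s) :=
    Real.sSup_nonneg (forall_mem_image.2 fun x _ => abs_nonneg (v i x))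
  simpa [Real.dist_eq] using (le_add_of_le_of_nonneg hu_le hv_nonneg).trans_lt hi

theorem stmt_3_general {ι : Type*} {l : Filter ι} [l.NeBot] {ℏ m lam g a b β₀ : ℝ}
    (hℏ : ℏ ≠ 0) (hm : m ≠ 0) (hab : a < b) {β : ι → ℝ} (hβ : Tendsto β l (𝓝 β₀))
    {φ : ι → ℝ → ℝ} (hsol : ∀ i, IsGPSolution ℏ m lam g a b (β i) (φ i))
    (hne : ∀ i, ∃ x ∈ Icc a b, φ i x ≠ 0) (hφ : TendstoUniformlyOn φ 0 l (Icc a b)) :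
    ∃ k : ℕ, 1 ≤ k ∧ β₀ = betaCrit ℏ m lam (b - a) k := by
  refine exists_eq_betaCrit_of_mem_dirichletEigenvalues hℏ hm (by_contra fun hc => ?_)
  obtain ⟨δ, hδ, hzero⟩ := exists_pos_forall_isDirichletCurve_eqOn_zero ℝ hab hc
  have hsmall : ∀ᶠ p : ℝ × ℝ in 𝓝 (β₀, 0),
      |(p.1 - β₀ + g * p.2 ^ 2) / (ℏ ^ 2 / (4 * m))| < δ :=
    ContinuousAt.eventually_lt (by fun_prop) continuousAt_const (by simpa using hδ)
  obtain ⟨η, hη, hηδ⟩ := Metric.eventually_nhds_iff.1 hsmall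
  obtain ⟨i, hβi, hφi⟩ := ((Metric.tendsto_nhds.1 hβ η hη).and
    (Metric.tendstoUniformlyOn_iff.1 hφ η hη)).exists
  obtain ⟨x, hx, hφx⟩ := hne i
  refine hφx (hzero _ _ _ (hsol i).isDirichletCurve (fun t ht => ?_) hx)
  have hdist : dist (β i, φ i t) (β₀, 0) < η :=
    max_lt hβi (dist_comm (φ i t) 0 ▸ hφi t (Ioo_subset_Icc_self ht))
  rw [smul_eq_mul, (hsol i).deriv_deriv_add_mul hℏ hm β₀ ht, norm_mul, Real.norm_eq_abs]
  exact mul_le_mul_of_nonneg_right (hηδ hdist).le (norm_nonneg _)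

/-- the quantum critical points of the BEC system are exactly the
values `β_k = ℏλ - (ℏ²/(4m))·(kπ/L)²`. -/
theorem stmt_3 (ℏ m lam L g : ℝ) (hℏ : 0 < ℏ) (hm : 0 < m) (hL : 0 < L)
    (hg : g ≠ 0) (βstar : ℝ)
    (β : ℕ → ℝ) (hβ : Filter.Tendsto β Filter.atTop (nhds βstar))
    (φ : ℕ → ℝ → ℝ)
    (hsol : ∀ n, IsGPSolution ℏ m lam g 0 L (β n) (φ n))
    (hC1 : ∀ n, ContDiffOn ℝ 1 (φ n) (Set.Icc 0 L))
    (hne : ∀ n, ∃ x ∈ Set.Icc (0:ℝ) L, φ n x ≠ 0)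
    (hsmall : Filter.Tendsto
      (fun n => (sSup ((fun x => |φ n x|) '' Set.Icc (0:ℝ) L)) +
        (sSup ((fun x => |deriv (φ n) x|) '' Set.Icc (0:ℝ) L)))
      Filter.atTop (nhds 0)) :
    ∃ k : ℕ, 1 ≤ k ∧ βstar = betaCrit ℏ m lam L k := by
  simpa only [sub_zero] using stmt_3_general hℏ.ne' hm.ne' hL hβ hsol hne
    (tendstoUniformlyOn_zero_of_tendsto_sSup_add_sSup
      (fun n => (isCompact_Icc.image_of_continuousOn (hsol n).1.abs).bddAbove) hsmall)
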